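/- arXiv:1407.2438 — 3 statements merged into one kernel-verified Lean document; each statement's English description precedes it below -/
import Mathlib

section
/- Let N ≥ 3, γ > 0, κ > 0, g₁ > 0, g₂ > 0, g > −√(g₁g₂), and let X₀ ≥ 0, Y₀, S₀₀ ≥ 0, E₀ be real numbers playing the roles of X(0), Y(0), S₀(0), E(0). Set β = c₃γ/c₂, C₀ = |Y₀|/(2γ) + 4κS₀₀/γ², M̃(t) = 1 + X₀ + C₀(e^{2γt} − 1), T₀ₘₐₓ = (1/β)ln(1 + β²/((1+X₀)(β² + c₁))), and T₀ₘᵢₙ = (1/β)ln(1 + β²/(M̃(T₀ₘₐₓ)(β² + c₁))). If E₀ < −(N+2)M̃(T₀ₘₐₓ)/(8N·T₀ₘᵢₙ²), then there exists T₀ ∈ [T₀ₘᵢₙ, T₀ₘₐₓ] such that F(T₀) + 1 < 0 and G(T₀) < 1. -/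
noncomputable section

open Real

/-!
Since `x ^ 2 / 2 < exp x - 1` for `x > 0`, the bracket in `G` satisfies
`c₁ t² / 2 + exp (β t) - 1 < (c₁ / β² + 1) (exp (β t) - 1)`, so it is below `1 / m` at the time
where the right-hand side equals `1 / m`; solving for `t` gives the logarithm in `Tmax` and `Tmin`.

With `A = 8 N E₀ / (N + 2)`, the increasing function `Mt` dominates `F + 1 - A t²`. The energy
threshold says precisely that `A Tmin² < -Mt Tmax`. Hence `F Tmin + 1 < 0`, and also `A < 0`, so
`F + 1 ≤ Mt Tmax` on `[0, Tmin]`, which makes `m = Mt Tmax` the right choice: `T₀ = Tmin` works.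
-/

section SmallnessTime

lemma sq_div_two_lt_exp_sub_one {x : ℝ} (hx : 0 < x) : x ^ 2 / 2 < exp x - 1 := by
  linarith [quadratic_le_exp_of_nonneg hx.le]

/-- The time `t` solving `m * (c / β ^ 2 + 1) * (exp (β * t) - 1) = 1`. The times `Tmax` and `Tmin`
of the theorem are its values at `m = 1 + X₀` and `m = Mt Tmax`, with `c = c₁`. -/
def smallnessTime (c β m : ℝ) : ℝ :=
  (1 / β) * log (1 + β ^ 2 / (m * (β ^ 2 + c)))

variable {c β m : ℝ}

lemma smallnessTime_pos (hc : 0 ≤ c) (hβ : 0 < β) (hm : 0 < m) : 0 < smallnessTime c β m := by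
  have hq : 0 < β ^ 2 / (m * (β ^ 2 + c)) := by positivity
  exact mul_pos (by positivity) (log_pos (by linarith))

lemma smallnessTime_antitoneOn (hc : 0 ≤ c) (hβ : 0 < β) :
    AntitoneOn (smallnessTime c β) (Set.Ioi 0) := by
  intro m (hm : 0 < m) m' (hm' : 0 < m') hmm'
  unfold smallnessTime
  gcongr

lemma exp_mul_smallnessTime (hc : 0 ≤ c) (hβ : 0 < β) (hm : 0 < m) :
    exp (β * smallnessTime c β m) = 1 + β ^ 2 / (m * (β ^ 2 + c)) := by
  rw [smallnessTime, one_div, mul_inv_cancel_left₀ hβ.ne', exp_log (by positivity)]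

lemma bracket_smallnessTime_lt (hc : 0 < c) (hβ : 0 < β) (hm : 0 < m) :
    c * smallnessTime c β m ^ 2 / 2 + exp (β * smallnessTime c β m) - 1 < 1 / m := by
  set T := smallnessTime c β m with hT
  have hx : 0 < β * T := mul_pos hβ (smallnessTime_pos hc.le hβ hm)
  calc c * T ^ 2 / 2 + exp (β * T) - 1
      = c / β ^ 2 * ((β * T) ^ 2 / 2) + (exp (β * T) - 1) := by field_simp; ring
    _ < c / β ^ 2 * (exp (β * T) - 1) + (exp (β * T) - 1) := by
        gcongr
        exact sq_div_two_lt_exp_sub_one hx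
    _ = 1 / m := by
        rw [hT, exp_mul_smallnessTime hc.le hβ hm]
        field_simp
        ring

end SmallnessTime

section Majorant

lemma linear_add_exp_remainder_le {δ K t : ℝ} (Y : ℝ) (hδ : 0 < δ) (hK : 0 ≤ K) (ht : 0 ≤ t) :
    Y * t + K * (exp (δ * t) - δ * t - 1) ≤ (|Y| / δ + K) * (exp (δ * t) - 1) := by
  have hlinear : Y * t ≤ |Y| / δ * (exp (δ * t) - 1) :=
    calc Y * t ≤ |Y| * t := by gcongr; exact le_abs_self Y
      _ = |Y| / δ * (δ * t) := by field_simp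
      _ ≤ |Y| / δ * (exp (δ * t) - 1) := by
          gcongr
          linarith [add_one_le_exp (δ * t)]
  have hremainder : K * (exp (δ * t) - δ * t - 1) ≤ K * (exp (δ * t) - 1) := by
    gcongr
    linarith [mul_nonneg hδ.le ht]
  linarith

variable {A T : ℝ} {m F : ℝ → ℝ}

lemma sSup_image_Icc_add_one_le_of_majorant (hT : 0 ≤ T) (hm : MonotoneOn m (Set.Ici 0))
    (hA : A ≤ 0) (hF : ∀ t, 0 ≤ t → F t + 1 ≤ m t + A * t ^ 2) :
    sSup (F '' Set.Icc 0 T) + 1 ≤ m T := by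
  rw [← le_sub_iff_add_le]
  refine csSup_le ((Set.nonempty_Icc.2 hT).image F) ?_
  rintro _ ⟨t, ⟨ht, htT⟩, rfl⟩
  linarith [hF t ht, hm ht hT htT, mul_nonpos_of_nonpos_of_nonneg hA (sq_nonneg t)]

theorem blowup_conditions_of_majorant {c β Tmax Tmin : ℝ} (hc : 0 < c) (hβ : 0 < β)
    (hm₀ : 0 < m 0) (hm : MonotoneOn m (Set.Ici 0))
    (hF : ∀ t, 0 ≤ t → F t + 1 ≤ m t + A * t ^ 2)
    (hTmax : Tmax = smallnessTime c β (m 0)) (hTmin : Tmin = smallnessTime c β (m Tmax))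
    (hA : A * Tmin ^ 2 < -m Tmax) :
    Tmin ≤ Tmax ∧ F Tmin + 1 < 0 ∧
      (sSup (F '' Set.Icc 0 Tmin) + 1) * (c * Tmin ^ 2 / 2 + exp (β * Tmin) - 1) < 1 := by
  have hTmax_pos : 0 < Tmax := hTmax ▸ smallnessTime_pos hc.le hβ hm₀
  have hm_le : m 0 ≤ m Tmax := hm Set.self_mem_Ici hTmax_pos.le hTmax_pos.le
  have hm_pos : 0 < m Tmax := hm₀.trans_le hm_le
  have hTmin_pos : 0 < Tmin := hTmin ▸ smallnessTime_pos hc.le hβ hm_pos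
  have hTmin_le : Tmin ≤ Tmax :=
    calc Tmin = smallnessTime c β (m Tmax) := hTmin
      _ ≤ smallnessTime c β (m 0) := smallnessTime_antitoneOn hc.le hβ hm₀ hm_pos hm_le
      _ = Tmax := hTmax.symm
  have hmTmin_le : m Tmin ≤ m Tmax := hm hTmin_pos.le hTmax_pos.le hTmin_le
  have hA_nonpos : A ≤ 0 := by
    refine nonpos_of_mul_nonpos_left (b := Tmin ^ 2) ?_ (by positivity)
    linarith
  have hsup : sSup (F '' Set.Icc 0 Tmin) + 1 ≤ m Tmax :=
    (sSup_image_Icc_add_one_le_of_majorant hTmin_pos.le hm hA_nonpos hF).trans hmTmin_le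
  have hbracket_nonneg : 0 ≤ c * Tmin ^ 2 / 2 + exp (β * Tmin) - 1 := by
    have : 1 ≤ exp (β * Tmin) := one_le_exp (by positivity)
    have : 0 ≤ c * Tmin ^ 2 / 2 := by positivity
    linarith
  refine ⟨hTmin_le, by linarith [hF Tmin hTmin_pos.le], ?_⟩
  calc (sSup (F '' Set.Icc 0 Tmin) + 1) * (c * Tmin ^ 2 / 2 + exp (β * Tmin) - 1)
      ≤ m Tmax * (c * Tmin ^ 2 / 2 + exp (β * Tmin) - 1) := by gcongr
    _ < m Tmax * (1 / m Tmax) := by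
        gcongr
        exact hTmin ▸ bracket_smallnessTime_lt hc hβ hm_pos
    _ = 1 := mul_one_div_cancel hm_pos.ne'

end Majorant

section CouplingConstants

variable {g₁ g₂ g : ℝ}

lemma add_mul_sqrt_div_sqrt_pos (hg₁ : 0 < g₁) (hg₂ : 0 < g₂) (hg : -√(g₁ * g₂) < g) :
    0 < g₁ + g * √g₁ / √g₂ := by
  have hfactor : g₁ + g * √g₁ / √g₂ = √g₁ / √g₂ * (√(g₁ * g₂) + g) := by
    rw [sqrt_mul hg₁.le]
    field_simp
    linear_combination -√g₂ * mul_self_sqrt hg₁.le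
  rw [hfactor]
  exact mul_pos (by positivity) (by linarith)

lemma coupling_min_pos (hg₁ : 0 < g₁) (hg₂ : 0 < g₂) (hg : -√(g₁ * g₂) < g) :
    0 < if 0 ≤ g then (4 / 5) * min 1 (min g₁ g₂)
      else (4 / 5) * min 1 (min (g₁ + g * √g₁ / √g₂) (g₂ + g * √g₂ / √g₁)) := by
  have h₁ := add_mul_sqrt_div_sqrt_pos hg₁ hg₂ hg
  have h₂ := add_mul_sqrt_div_sqrt_pos hg₂ hg₁ (mul_comm g₁ g₂ ▸ hg)
  split_ifs <;> positivity

end CouplingConstants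

theorem blowup_conditions_of_negative_energy_general
    {N γ κ c₁ β X₀ Y₀ S₀₀ E₀ Tmax Tmin : ℝ} {Mt F : ℝ → ℝ}
    (hN : 0 < N) (hγ : 0 < γ) (hκ : 0 ≤ κ) (hX₀ : -1 < X₀) (hS₀₀ : 0 ≤ S₀₀)
    (hc₁ : 0 < c₁) (hβ : 0 < β)
    (hMt : ∀ t, Mt t = 1 + X₀ + (|Y₀| / (2 * γ) + 4 * κ * S₀₀ / γ ^ 2) * (exp (2 * γ * t) - 1))
    (hTmax : Tmax = smallnessTime c₁ β (1 + X₀)) (hTmin : Tmin = smallnessTime c₁ β (Mt Tmax))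
    (hF : ∀ t, F t = X₀ + Y₀ * t + (8 * N / (N + 2)) * E₀ * t ^ 2
      + (4 * κ / γ ^ 2) * S₀₀ * (exp (2 * γ * t) - 2 * γ * t - 1))
    (hE₀ : E₀ < -((N + 2) * Mt Tmax) / (8 * N * Tmin ^ 2)) :
    Tmin ≤ Tmax ∧ F Tmin + 1 < 0 ∧
      (sSup (F '' Set.Icc 0 Tmin) + 1) * (c₁ * Tmin ^ 2 / 2 + exp (β * Tmin) - 1) < 1 := by
  have hMt_zero : Mt 0 = 1 + X₀ := by simp [hMt]
  have hMt_mono : Monotone Mt := by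
    intro s t hst
    rw [hMt, hMt]
    gcongr
  have hTmax_pos : 0 < Tmax := hTmax ▸ smallnessTime_pos hc₁.le hβ (by linarith)
  have hMt_pos : 0 < Mt Tmax := by linarith [hMt_mono hTmax_pos.le]
  have hTmin_pos : 0 < Tmin := hTmin ▸ smallnessTime_pos hc₁.le hβ hMt_pos
  have hF_le (t : ℝ) (ht : 0 ≤ t) : F t + 1 ≤ Mt t + 8 * N / (N + 2) * E₀ * t ^ 2 := by
    have hbound := linear_add_exp_remainder_le (δ := 2 * γ) (K := 4 * κ * S₀₀ / γ ^ 2) Y₀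
      (by positivity) (by positivity) ht
    rw [hF, hMt, div_mul_eq_mul_div (4 * κ)]
    linarith
  have henergy : 8 * N / (N + 2) * E₀ * Tmin ^ 2 < -Mt Tmax := by
    rw [lt_div_iff₀ (by positivity)] at hE₀
    field_simp
    linarith
  exact blowup_conditions_of_majorant hc₁ hβ (by linarith) (hMt_mono.monotoneOn _) hF_le
    (hMt_zero ▸ hTmax) hTmin henergy

/-- **Lemma 1.** If the initial energy `E₀` is sufficiently negative, then the blow-up
conditions `F(T₀) + 1 < 0` and `G(T₀) < 1` hold for some `T₀ ∈ [T₀min, T₀max]`. -/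
theorem blowup_conditions_of_negative_energy
    {N : ℕ} (hN : 3 ≤ N) {γ κ g₁ g₂ g : ℝ}
    (hγ : 0 < γ) (hκ : 0 < κ) (hg₁ : 0 < g₁) (hg₂ : 0 < g₂)
    (hg : -Real.sqrt (g₁ * g₂) < g)
    (X₀ Y₀ S₀₀ E₀ : ℝ) (hX₀ : 0 ≤ X₀) (hS₀₀ : 0 ≤ S₀₀)
    (c₁ c₂ c₃ β C₀ Tmax Tmin : ℝ) (Mt F M G : ℝ → ℝ)
    (hc₁ : c₁ = 4 * γ * κ + 4 * γ ^ 2 * (5 * (N : ℝ) + 6) / ((N : ℝ) - 2))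
    (hc₂ : c₂ = if 0 ≤ g then (4 / 5) * min 1 (min g₁ g₂)
      else (4 / 5) * min 1 (min (g₁ + g * Real.sqrt g₁ / Real.sqrt g₂)
        (g₂ + g * Real.sqrt g₂ / Real.sqrt g₁)))
    (hc₃ : c₃ = (32 * (N : ℝ) / ((N : ℝ) + 2)) * max 1 (max g₁ g₂))
    (hC₀ : C₀ = |Y₀| / (2 * γ) + 4 * κ * S₀₀ / γ ^ 2)
    (hβ : β = c₃ * γ / c₂)
    (hMt : ∀ t, Mt t = 1 + X₀ + C₀ * (Real.exp (2 * γ * t) - 1))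
    (hTmax : Tmax = (1 / β) * Real.log (1 + β ^ 2 / ((1 + X₀) * (β ^ 2 + c₁))))
    (hTmin : Tmin = (1 / β) * Real.log (1 + β ^ 2 / (Mt Tmax * (β ^ 2 + c₁))))
    (hF : ∀ t, F t = X₀ + Y₀ * t + (8 * (N : ℝ) / ((N : ℝ) + 2)) * E₀ * t ^ 2
      + (4 * κ / γ ^ 2) * S₀₀ * (Real.exp (2 * γ * t) - 2 * γ * t - 1))
    (hM : ∀ t, M t = sSup (F '' Set.Icc 0 t) + 1)
    (hG : ∀ t, G t = M t * (c₁ * t ^ 2 / 2 + Real.exp (c₃ * γ * t / c₂) - 1))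
    (hE₀ : E₀ < -(((N : ℝ) + 2) * Mt Tmax) / (8 * (N : ℝ) * Tmin ^ 2)) :
    ∃ T₀ ∈ Set.Icc Tmin Tmax, F T₀ + 1 < 0 ∧ G T₀ < 1 := by
  have hN_sub : (0 : ℝ) < N - 2 := sub_pos.2 (by exact_mod_cast hN)
  have hc₁_pos : 0 < c₁ := by rw [hc₁]; positivity
  have hc₂_pos : 0 < c₂ := hc₂ ▸ coupling_min_pos hg₁ hg₂ hg
  have hβ_pos : 0 < β := by rw [hβ, hc₃]; positivity
  obtain ⟨hle, hF_neg, hG_lt⟩ := blowup_conditions_of_negative_energy_general (by positivity) hγ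
    hκ.le (by linarith) hS₀₀ hc₁_pos hβ_pos (hC₀ ▸ hMt) hTmax hTmin hF hE₀
  exact ⟨Tmin, ⟨le_rfl, hle⟩, hF_neg, by rwa [hG, hM, mul_div_right_comm (c₃ * γ), ← hβ]⟩
end
end

section
/- Let N ≥ 3, γ > 0, κ > 0, g₁ > 0, g₂ > 0, g > −√(g₁g₂), and let X₀ ≥ 0, Y₀, S₀₀ ≥ 0, E₀ be real numbers playing the roles of X(0), Y(0), S₀(0), E(0). Set β = c₃γ/c₂, C₀ = 4N|E₀|/((N+2)γ²) + 4κS₀₀/γ², M̃(t) = 1 + X₀ + C₀(e^{2γt} − 1), T₀ₘₐₓ = (1/β)ln(1 + β²/((1+X₀)(β² + c₁))), and T₀ₘᵢₙ = (1/β)ln(1 + β²/(M̃(T₀ₘₐₓ)(β² + c₁))). If Y₀ < 8κS₀₀/γ − M̃(T₀ₘₐₓ)/T₀ₘᵢₙ, then there exists T₀ ∈ [T₀ₘᵢₙ, T₀ₘₐₓ] such that F(T₀) + 1 < 0 and G(T₀) < 1. -/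
noncomputable section

open Real

/-!
The witness is `T₀ = Tmin`. Write `m` for the majorant `M̃` evaluated at `Tmax`. For
`0 < t ≤ Tmin` the function `F + 1` lies strictly below `M̃(t) - (m / Tmin) t`. Since `M̃` is
increasing, this gives `F(Tmin) + 1 < m - m = 0` and `M(Tmin) ≤ m`. Finally `Tmin` is chosen so that
`(1 + c₁ / β ^ 2) (exp (β Tmin) - 1) = 1 / m`, and `(β Tmin) ^ 2 / 2 < exp (β Tmin) - 1` turns this
into `m (c₁ Tmin ^ 2 / 2 + exp (β Tmin) - 1) < 1`.
-/

/-- The time `τ` with `exp (β * τ) - 1 = β ^ 2 / (a * (β ^ 2 + c))`, for which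
`a * (c * τ ^ 2 / 2 + exp (β * τ) - 1) < 1`. Both `Tmax` and `Tmin` are of this form, with
`a = 1 + X₀` and `a = M̃(Tmax)`. -/
def thresholdTime (β c a : ℝ) : ℝ :=
  (1 / β) * log (1 + β ^ 2 / (a * (β ^ 2 + c)))

/-- The function `F` of the theorem, with `q` the coefficient of `t ^ 2` and `s` that of the
exponential remainder. -/
def virialBound (γ X Y q s t : ℝ) : ℝ :=
  X + Y * t + q * t ^ 2 + s * (exp (2 * γ * t) - 2 * γ * t - 1)

/-- The function `M̃` of the theorem. For suitable `C` it majorizes `F + 1` up to a linear term. -/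
def virialMajorant (γ X C t : ℝ) : ℝ :=
  1 + X + C * (exp (2 * γ * t) - 1)

/-- The constant `c₂` of the theorem, as a function of the couplings. -/
def coercivityConst (g₁ g₂ g : ℝ) : ℝ :=
  if 0 ≤ g then (4 / 5) * min 1 (min g₁ g₂)
  else (4 / 5) * min 1 (min (g₁ + g * √g₁ / √g₂) (g₂ + g * √g₂ / √g₁))

section ThresholdTime

variable {β c a b : ℝ}

lemma thresholdTime_pos (hβ : 0 < β) (hc : 0 ≤ c) (ha : 0 < a) : 0 < thresholdTime β c a := by
  have hlog : 0 < log (1 + β ^ 2 / (a * (β ^ 2 + c))) :=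
    log_pos (lt_add_of_pos_right 1 (by positivity))
  unfold thresholdTime
  positivity

lemma thresholdTime_le_thresholdTime (hβ : 0 < β) (hc : 0 ≤ c) (ha : 0 < a) (hab : a ≤ b) :
    thresholdTime β c b ≤ thresholdTime β c a := by
  have hb : 0 < b := ha.trans_le hab
  unfold thresholdTime
  gcongr

lemma exp_mul_thresholdTime (hβ : β ≠ 0) (hc : 0 ≤ c) (ha : 0 < a) :
    exp (β * thresholdTime β c a) = 1 + β ^ 2 / (a * (β ^ 2 + c)) := by
  rw [thresholdTime, ← mul_assoc, mul_one_div_cancel hβ, one_mul, exp_log (by positivity)]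

lemma mul_quadratic_add_exp_thresholdTime_lt_one (hβ : 0 < β) (hc : 0 < c) (ha : 0 < a) :
    a * (c * thresholdTime β c a ^ 2 / 2 + exp (β * thresholdTime β c a) - 1) < 1 := by
  have hexp := exp_mul_thresholdTime hβ.ne' hc.le ha
  have hpos := thresholdTime_pos hβ hc.le ha
  set τ := thresholdTime β c a
  have hsq : (β * τ) ^ 2 / 2 < exp (β * τ) - 1 := by
    linarith [quadratic_le_exp_of_nonneg (mul_pos hβ hpos).le, mul_pos hβ hpos]
  calc a * (c * τ ^ 2 / 2 + exp (β * τ) - 1)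
      = a * (c / β ^ 2 * ((β * τ) ^ 2 / 2) + (exp (β * τ) - 1)) := by field_simp; ring
    _ < a * (c / β ^ 2 * (exp (β * τ) - 1) + (exp (β * τ) - 1)) := by gcongr
    _ = 1 := by rw [hexp]; field_simp; ring

end ThresholdTime

section Virial

variable {γ X Y q s C : ℝ}

lemma virialMajorant_zero : virialMajorant γ X C 0 = 1 + X := by
  simp [virialMajorant]

lemma monotone_virialMajorant (hγ : 0 ≤ γ) (hC : 0 ≤ C) : Monotone (virialMajorant γ X C) := by
  intro t u htu
  unfold virialMajorant
  gcongr

lemma virialBound_add_one_le (hγ : 0 < γ) (hC : |q| / (2 * γ ^ 2) + s ≤ C) {t : ℝ} (ht : 0 ≤ t) :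
    virialBound γ X Y q s t + 1 ≤ virialMajorant γ X C t - (2 * γ * s - Y) * t := by
  have hx : 0 ≤ 2 * γ * t := by positivity
  have hsq : 2 * γ ^ 2 * t ^ 2 ≤ exp (2 * γ * t) - 1 := by
    linarith [quadratic_le_exp_of_nonneg hx]
  have hquad : q * t ^ 2 ≤ (C - s) * (exp (2 * γ * t) - 1) :=
    calc q * t ^ 2 ≤ |q| * t ^ 2 := by gcongr; exact le_abs_self q
      _ = |q| / (2 * γ ^ 2) * (2 * γ ^ 2 * t ^ 2) := by field_simp
      _ ≤ |q| / (2 * γ ^ 2) * (exp (2 * γ * t) - 1) := by gcongr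
      _ ≤ (C - s) * (exp (2 * γ * t) - 1) := by
        gcongr
        · linarith [add_one_le_exp (2 * γ * t)]
        · linarith
  unfold virialBound virialMajorant
  linarith

variable {τ T : ℝ}

lemma virialBound_add_one_neg (hγ : 0 < γ) (hC_nonneg : 0 ≤ C) (hC : |q| / (2 * γ ^ 2) + s ≤ C)
    (hτ : 0 < τ) (hτT : τ ≤ T) (hY : Y < 2 * γ * s - virialMajorant γ X C T / τ) :
    virialBound γ X Y q s τ + 1 < 0 := by
  have hdrift : virialMajorant γ X C T < (2 * γ * s - Y) * τ :=
    (div_lt_iff₀ hτ).1 (by linarith)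
  linarith [virialBound_add_one_le (X := X) (Y := Y) hγ hC hτ.le,
    monotone_virialMajorant (X := X) hγ.le hC_nonneg hτT]

lemma sSup_virialBound_add_one_le (hγ : 0 < γ) (hC_nonneg : 0 ≤ C) (hC : |q| / (2 * γ ^ 2) + s ≤ C)
    (hY : Y ≤ 2 * γ * s) (hτ : 0 ≤ τ) (hτT : τ ≤ T) :
    sSup (virialBound γ X Y q s '' Set.Icc 0 τ) + 1 ≤ virialMajorant γ X C T := by
  rw [← le_sub_iff_add_le]
  refine csSup_le ((Set.nonempty_Icc.2 hτ).image _) ?_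
  rintro _ ⟨t, ⟨ht₀, htτ⟩, rfl⟩
  linarith [virialBound_add_one_le (X := X) (Y := Y) hγ hC ht₀,
    monotone_virialMajorant (X := X) hγ.le hC_nonneg (htτ.trans hτT),
    mul_nonneg (sub_nonneg.2 hY) ht₀]

end Virial

lemma add_mul_sqrt_div_sqrt_pos_s2 {a b g : ℝ} (ha : 0 < a) (hb : 0 < b) (hg : -√(a * b) < g) :
    0 < a + g * √a / √b := by
  have hfactor : a + g * √a / √b = √a * (√(a * b) + g) / √b := by
    rw [sqrt_mul ha.le, eq_div_iff (sqrt_pos.2 hb).ne', add_mul,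
      div_mul_cancel₀ _ (sqrt_pos.2 hb).ne', mul_add, ← mul_assoc, mul_self_sqrt ha.le,
      mul_comm g]
  have hsum : 0 < √(a * b) + g := by linarith
  rw [hfactor]
  positivity

lemma coercivityConst_pos {g₁ g₂ g : ℝ} (hg₁ : 0 < g₁) (hg₂ : 0 < g₂) (hg : -√(g₁ * g₂) < g) :
    0 < coercivityConst g₁ g₂ g := by
  have h₁ := add_mul_sqrt_div_sqrt_pos_s2 hg₁ hg₂ hg
  have h₂ := add_mul_sqrt_div_sqrt_pos_s2 hg₂ hg₁ (mul_comm g₁ g₂ ▸ hg)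
  unfold coercivityConst
  split_ifs <;> positivity

theorem blowup_conditions_of_negative_Y_general {γ β c X Y q s C Tmax Tmin : ℝ}
    (hγ : 0 < γ) (hβ : 0 < β) (hc : 0 < c) (hX : -1 < X)
    (hC_nonneg : 0 ≤ C) (hC : |q| / (2 * γ ^ 2) + s ≤ C)
    (hTmax : Tmax = thresholdTime β c (1 + X))
    (hTmin : Tmin = thresholdTime β c (virialMajorant γ X C Tmax))
    (hY : Y < 2 * γ * s - virialMajorant γ X C Tmax / Tmin) :
    Tmin ≤ Tmax ∧ virialBound γ X Y q s Tmin + 1 < 0 ∧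
      (sSup (virialBound γ X Y q s '' Set.Icc 0 Tmin) + 1) *
        (c * Tmin ^ 2 / 2 + exp (β * Tmin) - 1) < 1 := by
  have hX' : 0 < 1 + X := by linarith
  have hTmax_pos : 0 < Tmax := hTmax ▸ thresholdTime_pos hβ hc.le hX'
  have hle_majorant : 1 + X ≤ virialMajorant γ X C Tmax :=
    virialMajorant_zero.symm.trans_le (monotone_virialMajorant hγ.le hC_nonneg hTmax_pos.le)
  have hmajorant_pos : 0 < virialMajorant γ X C Tmax := hX'.trans_le hle_majorant
  have hTmin_pos : 0 < Tmin := hTmin ▸ thresholdTime_pos hβ hc.le hmajorant_pos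
  have hle : Tmin ≤ Tmax := by
    conv_rhs => rw [hTmax]
    exact hTmin.trans_le (thresholdTime_le_thresholdTime hβ hc.le hX' hle_majorant)
  have hY_le : Y ≤ 2 * γ * s := by linarith [div_pos hmajorant_pos hTmin_pos]
  have hfactor_nonneg : 0 ≤ c * Tmin ^ 2 / 2 + exp (β * Tmin) - 1 := by
    have : 0 ≤ c * Tmin ^ 2 / 2 := by positivity
    linarith [one_le_exp (mul_pos hβ hTmin_pos).le]
  refine ⟨hle, virialBound_add_one_neg hγ hC_nonneg hC hTmin_pos hle hY, ?_⟩
  calc _ ≤ virialMajorant γ X C Tmax * (c * Tmin ^ 2 / 2 + exp (β * Tmin) - 1) := by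
        gcongr
        exact sSup_virialBound_add_one_le hγ hC_nonneg hC hY_le hTmin_pos.le hle
    _ < 1 := by
        rw [hTmin]
        exact mul_quadratic_add_exp_thresholdTime_lt_one hβ hc hmajorant_pos

/-- **Lemma 2.** If `Y₀` is sufficiently negative, then the blow-up conditions
`F(T₀) + 1 < 0` and `G(T₀) < 1` hold for some `T₀ ∈ [T₀min, T₀max]`. -/
theorem blowup_conditions_of_negative_Y
    {N : ℕ} (hN : 3 ≤ N) {γ κ g₁ g₂ g : ℝ}
    (hγ : 0 < γ) (hκ : 0 < κ) (hg₁ : 0 < g₁) (hg₂ : 0 < g₂)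
    (hg : -Real.sqrt (g₁ * g₂) < g)
    (X₀ Y₀ S₀₀ E₀ : ℝ) (hX₀ : 0 ≤ X₀) (hS₀₀ : 0 ≤ S₀₀)
    (c₁ c₂ c₃ β C₀ Tmax Tmin : ℝ) (Mt F M G : ℝ → ℝ)
    (hc₁ : c₁ = 4 * γ * κ + 4 * γ ^ 2 * (5 * (N : ℝ) + 6) / ((N : ℝ) - 2))
    (hc₂ : c₂ = if 0 ≤ g then (4 / 5) * min 1 (min g₁ g₂)
      else (4 / 5) * min 1 (min (g₁ + g * Real.sqrt g₁ / Real.sqrt g₂)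
        (g₂ + g * Real.sqrt g₂ / Real.sqrt g₁)))
    (hc₃ : c₃ = (32 * (N : ℝ) / ((N : ℝ) + 2)) * max 1 (max g₁ g₂))
    (hC₀ : C₀ = 4 * (N : ℝ) * |E₀| / (((N : ℝ) + 2) * γ ^ 2) + 4 * κ * S₀₀ / γ ^ 2)
    (hβ : β = c₃ * γ / c₂)
    (hMt : ∀ t, Mt t = 1 + X₀ + C₀ * (Real.exp (2 * γ * t) - 1))
    (hTmax : Tmax = (1 / β) * Real.log (1 + β ^ 2 / ((1 + X₀) * (β ^ 2 + c₁))))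
    (hTmin : Tmin = (1 / β) * Real.log (1 + β ^ 2 / (Mt Tmax * (β ^ 2 + c₁))))
    (hF : ∀ t, F t = X₀ + Y₀ * t + (8 * (N : ℝ) / ((N : ℝ) + 2)) * E₀ * t ^ 2
      + (4 * κ / γ ^ 2) * S₀₀ * (Real.exp (2 * γ * t) - 2 * γ * t - 1))
    (hM : ∀ t, M t = sSup (F '' Set.Icc 0 t) + 1)
    (hG : ∀ t, G t = M t * (c₁ * t ^ 2 / 2 + Real.exp (c₃ * γ * t / c₂) - 1))
    (hY₀ : Y₀ < 8 * κ * S₀₀ / γ - Mt Tmax / Tmin) :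
    ∃ T₀ ∈ Set.Icc Tmin Tmax, F T₀ + 1 < 0 ∧ G T₀ < 1 := by
  have hN_sub_pos : (0 : ℝ) < N - 2 := sub_pos.2 (by exact_mod_cast hN)
  have hc₁_pos : 0 < c₁ := by rw [hc₁]; positivity
  have hc₂_pos : 0 < c₂ := hc₂ ▸ coercivityConst_pos hg₁ hg₂ hg
  have hc₃_pos : 0 < c₃ := by rw [hc₃]; positivity
  have hβ_pos : 0 < β := by rw [hβ]; positivity
  have hC₀_nonneg : 0 ≤ C₀ := by rw [hC₀]; positivity
  have hcoeff : |8 * (N : ℝ) / (N + 2) * E₀| / (2 * γ ^ 2) + 4 * κ / γ ^ 2 * S₀₀ ≤ C₀ := by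
    rw [hC₀, abs_mul, abs_of_nonneg (by positivity : 0 ≤ 8 * (N : ℝ) / (N + 2))]
    exact le_of_eq (by field_simp; ring)
  have hslope : 2 * γ * (4 * κ / γ ^ 2 * S₀₀) = 8 * κ * S₀₀ / γ := by field_simp; ring
  have hrate (t : ℝ) : c₃ * γ * t / c₂ = β * t := by rw [hβ]; ring
  obtain rfl : Mt = virialMajorant γ X₀ C₀ := funext hMt
  obtain rfl : F = virialBound γ X₀ Y₀ _ _ := funext hF
  obtain ⟨hle, hneg, hlt⟩ := blowup_conditions_of_negative_Y_general hγ hβ_pos hc₁_pos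
    (neg_one_lt_zero.trans_le hX₀) hC₀_nonneg hcoeff hTmax hTmin (hslope ▸ hY₀)
  exact ⟨Tmin, ⟨le_rfl, hle⟩, hneg, by rwa [hG, hM, hrate]⟩
end
end

section
/- Let κ > γ > 0, g₁ = g₂, set ω = √(κ² − γ²), and let α ∈ [0, π/2) be defined by e^{iα} = κ/(ω − iγ). If U is a complex-valued function of (t,x), smooth in t with U(t,·) Schwartz in x, solving the single NLS equation i∂ₜU = −ΔU + ωU − (g + g₁)|U|²U, then the pair u = e^{iα/2}U, v = e^{−iα/2}U is a solution of the coupled PT-symmetric NLS system (so in particular both components have equal L² norms: ‖u(t)‖₂² = ‖v(t)‖₂² for all t). -/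
noncomputable section

open MeasureTheory Complex Real

abbrev Space (N : ℕ) := EuclideanSpace ℝ (Fin N)

/-- Partial derivative of `f` in the `i`-th coordinate direction. -/
def pD {N : ℕ} (f : Space N → ℂ) (i : Fin N) (x : Space N) : ℂ :=
  fderiv ℝ f x (EuclideanSpace.single i 1)

/-- Laplacian of `f`. -/
def lap {N : ℕ} (f : Space N → ℂ) (x : Space N) : ℂ :=
  ∑ i, fderiv ℝ (fun y => pD f i y) x (EuclideanSpace.single i 1)

/-- Squared modulus of the gradient of `f`. -/
def gradSq {N : ℕ} (f : Space N → ℂ) (x : Space N) : ℝ :=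
  ∑ i, ‖pD f i x‖ ^ 2

/-- `x·∇f`. -/
def xGrad {N : ℕ} (f : Space N → ℂ) (x : Space N) : ℂ :=
  ∑ i, (x i : ℂ) * pD f i x

/-- A solution of the coupled PT-symmetric NLS system on the time interval `[0, T]`. -/
structure IsSolution (N : ℕ) (γ κ g₁ g₂ g T : ℝ)
    (u v : ℝ → Space N → ℂ) : Prop where
  smooth_u : ∀ x, ContDiff ℝ (⊤ : ℕ∞) fun t => u t x
  smooth_v : ∀ x, ContDiff ℝ (⊤ : ℕ∞) fun t => v t x
  schwartz_u : ∀ t, ∃ f : SchwartzMap (Space N) ℂ, ∀ x, u t x = f x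
  schwartz_v : ∀ t, ∃ f : SchwartzMap (Space N) ℂ, ∀ x, v t x = f x
  eq_u : ∀ t ∈ Set.Icc (0 : ℝ) T, ∀ x,
    Complex.I * deriv (fun s => u s x) t =
      - lap (u t) x + Complex.I * (γ : ℂ) * u t x + (κ : ℂ) * v t x
        - ((g₁ : ℂ) * (‖u t x‖ : ℂ) ^ 2 + (g : ℂ) * (‖v t x‖ : ℂ) ^ 2) * u t x
  eq_v : ∀ t ∈ Set.Icc (0 : ℝ) T, ∀ x,
    Complex.I * deriv (fun s => v s x) t =
      - lap (v t) x - Complex.I * (γ : ℂ) * v t x + (κ : ℂ) * u t x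
        - ((g : ℂ) * (‖u t x‖ : ℂ) ^ 2 + (g₂ : ℂ) * (‖v t x‖ : ℂ) ^ 2) * v t x

/-- Stokes component `S₀`. -/
def S0 {N : ℕ} (u v : ℝ → Space N → ℂ) (t : ℝ) : ℝ :=
  ∫ x, (‖u t x‖ ^ 2 + ‖v t x‖ ^ 2)

/-- Stokes component `S₁`. -/
def S1 {N : ℕ} (u v : ℝ → Space N → ℂ) (t : ℝ) : ℝ :=
  2 * (∫ x, u t x * (starRingEnd ℂ) (v t x)).re

/-- Stokes component `S₂`. -/
def S2 {N : ℕ} (u v : ℝ → Space N → ℂ) (t : ℝ) : ℝ :=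
  2 * (∫ x, u t x * (starRingEnd ℂ) (v t x)).im

/-- Stokes component `S₃`. -/
def S3 {N : ℕ} (u v : ℝ → Space N → ℂ) (t : ℝ) : ℝ :=
  ∫ x, (‖u t x‖ ^ 2 - ‖v t x‖ ^ 2)

/-- The energy `E(t)`. -/
def energy {N : ℕ} (κ g₁ g₂ g : ℝ) (u v : ℝ → Space N → ℂ) (t : ℝ) : ℝ :=
  ∫ x, (gradSq (u t) x + gradSq (v t) x
    + κ * (u t x * (starRingEnd ℂ) (v t x) + (starRingEnd ℂ) (u t x) * v t x).re
    - g₁ / 2 * ‖u t x‖ ^ 4 - g₂ / 2 * ‖v t x‖ ^ 4 - g * ‖u t x‖ ^ 2 * ‖v t x‖ ^ 2)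

/-- The mean squared width `X(t)`. -/
def Xvar {N : ℕ} (u v : ℝ → Space N → ℂ) (t : ℝ) : ℝ :=
  ∫ x, ‖x‖ ^ 2 * (‖u t x‖ ^ 2 + ‖v t x‖ ^ 2)

/-- A solution of the coupled PT-symmetric NLS system for all times `t ∈ ℝ`. -/
structure IsSolutionAll (N : ℕ) (γ κ g₁ g₂ g : ℝ)
    (u v : ℝ → Space N → ℂ) : Prop where
  smooth_u : ∀ x, ContDiff ℝ (⊤ : ℕ∞) fun t => u t x
  smooth_v : ∀ x, ContDiff ℝ (⊤ : ℕ∞) fun t => v t x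
  schwartz_u : ∀ t, ∃ f : SchwartzMap (Space N) ℂ, ∀ x, u t x = f x
  schwartz_v : ∀ t, ∃ f : SchwartzMap (Space N) ℂ, ∀ x, v t x = f x
  eq_u : ∀ t, ∀ x,
    Complex.I * deriv (fun s => u s x) t =
      - lap (u t) x + Complex.I * (γ : ℂ) * u t x + (κ : ℂ) * v t x
        - ((g₁ : ℂ) * (‖u t x‖ : ℂ) ^ 2 + (g : ℂ) * (‖v t x‖ : ℂ) ^ 2) * u t x
  eq_v : ∀ t, ∀ x,
    Complex.I * deriv (fun s => v s x) t =
      - lap (v t) x - Complex.I * (γ : ℂ) * v t x + (κ : ℂ) * u t x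
        - ((g : ℂ) * (‖u t x‖ : ℂ) ^ 2 + (g₂ : ℂ) * (‖v t x‖ : ℂ) ^ 2) * v t x

/-! Write `u = e^{iα/2}U` and `v = e^{-iα/2}U`. The relation `e^{iα} = κ/(ω - iγ)` says exactly that
`κv = (ω - iγ)u`, and its complex conjugate that `κu = (ω + iγ)v`. Hence `iγu + κv = ωu` and
`-iγv + κu = ωv`: on this ansatz gain, loss and coupling collapse to the potential `ω`. As
`|u| = |v|`, the nonlinearities collapse as well, so the system says that `u` and `v` both solve the
single equation, which holds because that equation is invariant under constant phase rotations. -/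

section Laplacian

variable {N : ℕ} (c : ℂ) (f : Space N → ℂ)

theorem pD_const_mul (i : Fin N) (x : Space N) :
    pD (fun y => c * f y) i x = c * pD f i x :=
  congrArg (fun L : Space N →L[ℝ] ℂ => L (EuclideanSpace.single i 1))
    (congrFun (fderiv_const_smul_field (𝕜 := ℝ) (f := f) c) x)

theorem lap_eq_sum_pD_pD (x : Space N) : lap f x = ∑ i, pD (pD f i) i x := rfl

theorem lap_const_mul (x : Space N) : lap (fun y => c * f y) x = c * lap f x := by
  have pD_fun (i : Fin N) : pD (fun y => c * f y) i = fun y => c * pD f i y :=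
    funext (pD_const_mul c f i)
  simp only [lap_eq_sum_pD_pD, pD_fun, pD_const_mul, Finset.mul_sum]

end Laplacian

/-- `U` is a solution, smooth in time and Schwartz in space, of the cubic nonlinear Schrödinger
equation `i∂ₜU = -ΔU + ωU - μ|U|²U`. The coefficients are allowed to be complex. -/
structure IsNLSSolution {N : ℕ} (ω μ : ℂ) (U : ℝ → Space N → ℂ) : Prop where
  smooth : ∀ x, ContDiff ℝ (⊤ : ℕ∞) fun t => U t x
  schwartz : ∀ t, ∃ f : SchwartzMap (Space N) ℂ, ∀ x, U t x = f x
  eq : ∀ t, ∀ x, Complex.I * deriv (fun s => U s x) t =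
    - lap (U t) x + ω * U t x - μ * (‖U t x‖ : ℂ) ^ 2 * U t x

theorem IsNLSSolution.const_mul {N : ℕ} {ω μ c : ℂ} {U : ℝ → Space N → ℂ}
    (hU : IsNLSSolution ω μ U) (hc : ‖c‖ = 1) :
    IsNLSSolution ω μ fun t x => c * U t x where
  smooth x := contDiff_const.mul (hU.smooth x)
  schwartz t := by
    obtain ⟨f, hf⟩ := hU.schwartz t
    exact ⟨c • f, fun x => by rw [hf x, smul_apply, smul_eq_mul]⟩
  eq t x := by
    rw [deriv_const_mul_field, lap_const_mul, norm_mul, hc, one_mul]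
    linear_combination c * hU.eq t x

theorem IsNLSSolution.isSolutionAll {N : ℕ} {γ κ g₁ g₂ g : ℝ} {ω : ℂ} {u v : ℝ → Space N → ℂ}
    (hu : IsNLSSolution ω (g + g₁) u) (hv : IsNLSSolution ω (g + g₂) v)
    (hnorm : ∀ t x, ‖u t x‖ = ‖v t x‖)
    (hκv : ∀ t x, κ * v t x = (ω - I * γ) * u t x)
    (hκu : ∀ t x, κ * u t x = (ω + I * γ) * v t x) :
    IsSolutionAll N γ κ g₁ g₂ g u v where
  smooth_u := hu.smooth
  smooth_v := hv.smooth
  schwartz_u := hu.schwartz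
  schwartz_v := hv.schwartz
  eq_u t x := by
    rw [← hnorm t x]
    linear_combination hu.eq t x - hκv t x
  eq_v t x := by
    rw [hnorm t x]
    linear_combination hv.eq t x - hκu t x

section HalfPhase

theorem conj_exp_I_mul_half (α : ℝ) :
    (starRingEnd ℂ) (Complex.exp (I * α / 2)) = Complex.exp (-(I * α / 2)) := by
  rw [← exp_conj, map_div₀, map_mul, conj_I, conj_ofReal, map_ofNat, neg_mul, neg_div]

theorem norm_exp_I_mul_half (α : ℝ) : ‖Complex.exp (I * α / 2)‖ = 1 := by
  simpa [mul_div_assoc] using norm_exp_I_mul_ofReal (α / 2)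

theorem norm_exp_neg_I_mul_half (α : ℝ) : ‖Complex.exp (-(I * α / 2))‖ = 1 := by
  rw [← conj_exp_I_mul_half, norm_conj, norm_exp_I_mul_half]

variable {γ κ ω α : ℝ}

theorem coupling_mul_exp_neg_half (hexp : Complex.exp (I * α) = κ / (ω - I * γ)) :
    κ * Complex.exp (-(I * α / 2)) = (ω - I * γ) * Complex.exp (I * α / 2) := by
  have hden : (ω : ℂ) - I * γ ≠ 0 := fun h =>
    Complex.exp_ne_zero (I * α) (by rw [hexp, h, div_zero])
  calc κ * Complex.exp (-(I * α / 2))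
      = (ω - I * γ) * (Complex.exp (I * α) * Complex.exp (-(I * α / 2))) := by
        rw [← mul_assoc, hexp, mul_div_cancel₀ _ hden]
    _ = (ω - I * γ) * Complex.exp (I * α / 2) := by
        rw [← Complex.exp_add, ← sub_eq_add_neg, sub_half]

theorem coupling_mul_exp_half (hexp : Complex.exp (I * α) = κ / (ω - I * γ)) :
    κ * Complex.exp (I * α / 2) = (ω + I * γ) * Complex.exp (-(I * α / 2)) := by
  have hconj := congrArg (starRingEnd ℂ) (coupling_mul_exp_neg_half hexp)
  rw [← conj_exp_I_mul_half] at hconj ⊢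
  simpa only [map_mul, map_sub, conj_ofReal, conj_I, neg_mul, sub_neg_eq_add, conj_conj]
    using hconj

end HalfPhase

theorem single_NLS_solution_general {N : ℕ} {γ κ g₁ g ω α : ℝ}
    (hexp : Complex.exp (I * α) = κ / (ω - I * γ))
    {U : ℝ → Space N → ℂ} (hU : IsNLSSolution ω (g + g₁) U) :
    IsSolutionAll N γ κ g₁ g₁ g
      (fun t x => Complex.exp (I * α / 2) * U t x)
      (fun t x => Complex.exp (-(I * α / 2)) * U t x) ∧
    ∀ t : ℝ, (∫ x, ‖Complex.exp (I * α / 2) * U t x‖ ^ 2) =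
      ∫ x, ‖Complex.exp (-(I * α / 2)) * U t x‖ ^ 2 := by
  have hnorm (t : ℝ) (x : Space N) :
      ‖Complex.exp (I * α / 2) * U t x‖ = ‖Complex.exp (-(I * α / 2)) * U t x‖ := by
    rw [norm_mul, norm_mul, norm_exp_I_mul_half, norm_exp_neg_I_mul_half]
  have hu := hU.const_mul (norm_exp_I_mul_half α)
  have hv := hU.const_mul (norm_exp_neg_I_mul_half α)
  refine ⟨hu.isSolutionAll hv hnorm (fun t x => ?_) (fun t x => ?_), fun t => ?_⟩
  · rw [← mul_assoc, coupling_mul_exp_neg_half hexp, mul_assoc]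
  · rw [← mul_assoc, coupling_mul_exp_half hexp, mul_assoc]
  · simp only [hnorm]

/-- A solution of the single NLS equation `i∂ₜU = -ΔU + ωU - (g + g₁)|U|²U` produces a
solution `(e^{iα/2}U, e^{-iα/2}U)` of the coupled PT-symmetric NLS system, with both
components having equal `L²` norms. -/
theorem single_NLS_solution
    {N : ℕ} {γ κ g₁ g₂ g ω α : ℝ}
    (hγ : 0 < γ) (hκγ : γ < κ) (h₁₂ : g₁ = g₂)
    (hω : ω = Real.sqrt (κ ^ 2 - γ ^ 2))
    (hα : α ∈ Set.Ico 0 (Real.pi / 2))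
    (hexp : Complex.exp (Complex.I * (α : ℂ)) = (κ : ℂ) / ((ω : ℂ) - Complex.I * (γ : ℂ)))
    (U : ℝ → Space N → ℂ)
    (hUsmooth : ∀ x, ContDiff ℝ (⊤ : ℕ∞) fun t => U t x)
    (hUschwartz : ∀ t, ∃ f : SchwartzMap (Space N) ℂ, ∀ x, U t x = f x)
    (hU : ∀ t, ∀ x, Complex.I * deriv (fun s => U s x) t =
      - lap (U t) x + (ω : ℂ) * U t x - ((g : ℂ) + (g₁ : ℂ)) * (‖U t x‖ : ℂ) ^ 2 * U t x) :
    IsSolutionAll N γ κ g₁ g₂ g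
      (fun t x => Complex.exp (Complex.I * (α : ℂ) / 2) * U t x)
      (fun t x => Complex.exp (-(Complex.I * (α : ℂ) / 2)) * U t x) ∧
    ∀ t : ℝ, (∫ x, ‖Complex.exp (Complex.I * (α : ℂ) / 2) * U t x‖ ^ 2) =
      ∫ x, ‖Complex.exp (-(Complex.I * (α : ℂ) / 2)) * U t x‖ ^ 2 := by
  subst h₁₂
  exact single_NLS_solution_general hexp ⟨hUsmooth, hUschwartz, hU⟩
end
end
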